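/- The limit of F(x) = arcsl(x)/(x·Φ(x⁴, 3/2, 1/4)) as x → 0⁺ equals 1/8; consequently the constant factor α = 1/8 in the lower bound α·x·Φ(x⁴, 3/2, 1/4) < arcsl(x) for 0 < x < 1 cannot be replaced by any larger constant. -/

import Mathlib

/-- The arc lemniscate sine function: `arcsl x = ∫₀ˣ dt / √(1 - t⁴)`. -/
noncomputable def arcsl (x : ℝ) : ℝ := ∫ t in (0:ℝ)..x, 1 / Real.sqrt (1 - t ^ 4)

/-- The Lerch zeta function: `Φ(z, s, a) = ∑ₖ zᵏ / (k + a)ˢ`. -/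
noncomputable def lerchPhi (z s a : ℝ) : ℝ := ∑' k : ℕ, z ^ k / ((k : ℝ) + a) ^ s

/-! Near `0`, `arcsl x ~ x` because the integrand is `1` at `0`, while `Φ(xⁿ, s, a)` tends to its
constant term `a⁻ˢ`, so `arcsl x / (x Φ(xⁿ, s, a)) → aˢ`. A constant `α` satisfying the lower bound
is at most this ratio at points arbitrarily close to `0`, hence at most its limit `aˢ`. -/

open Filter Topology

theorem hasDerivAt_arcsl {x : ℝ} (hx : |x| < 1) :
    HasDerivAt arcsl (1 / √(1 - x ^ 4)) x := by
  have continuousAt_integrand {t : ℝ} (ht : |t| < 1) :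
      ContinuousAt (fun t : ℝ ↦ 1 / √(1 - t ^ 4)) t := by
    have ht4 : t ^ 4 < 1 := by
      rw [← Even.pow_abs (by decide)]
      exact pow_lt_one₀ (abs_nonneg t) ht four_ne_zero
    exact continuousAt_const.div (by fun_prop) (Real.sqrt_pos.2 (sub_pos.2 ht4)).ne'
  have abs_lt_one {t : ℝ} (ht : t ∈ Set.uIcc 0 x) : |t| < 1 :=
    lt_of_le_of_lt (by simpa using Set.abs_sub_left_of_mem_uIcc ht) hx
  have measurable_integrand : Measurable fun t : ℝ ↦ 1 / √(1 - t ^ 4) := by fun_prop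
  exact intervalIntegral.integral_hasDerivAt_right
    (ContinuousOn.intervalIntegrable fun t ht ↦
      (continuousAt_integrand (abs_lt_one ht)).continuousWithinAt)
    measurable_integrand.stronglyMeasurable.stronglyMeasurableAtFilter (continuousAt_integrand hx)

theorem tendsto_arcsl_div_self : Tendsto (fun x ↦ arcsl x / x) (𝓝[≠] 0) (𝓝 1) := by
  have arcsl_zero : arcsl 0 = 0 := intervalIntegral.integral_same
  have hderiv : HasDerivAt arcsl 1 0 := by simpa using hasDerivAt_arcsl (x := 0) (by simp)
  simpa [arcsl_zero, div_eq_inv_mul] using hderiv.tendsto_slope_zero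

theorem tendsto_succ_add_rpow_div_add_rpow (s a : ℝ) :
    Tendsto (fun k : ℕ ↦ ((k + 1 : ℝ) + a) ^ s / ((k : ℝ) + a) ^ s) atTop (𝓝 1) := by
  have hbase : Tendsto (fun k : ℕ ↦ ((k + 1 : ℝ) + a) / (k + a)) atTop (𝓝 1) := by
    simpa [add_comm, add_left_comm] using
      tendsto_add_mul_div_add_mul_atTop_nhds (1 + a) a (1 : ℝ) one_ne_zero
  have hpow := hbase.rpow_const (p := s) (Or.inl one_ne_zero)
  rw [Real.one_rpow] at hpow
  refine hpow.congr' ?_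
  filter_upwards [tendsto_natCast_atTop_atTop.eventually_ge_atTop (-a)] with k hk
  exact Real.div_rpow (by linarith) (by linarith) s

theorem hasFPowerSeriesOnBall_lerchPhi (s a : ℝ) :
    HasFPowerSeriesOnBall (fun z ↦ lerchPhi z s a)
      (.ofScalars ℝ fun k : ℕ ↦ (((k : ℝ) + a) ^ s)⁻¹) 0 1 := by
  set c : ℕ → ℝ := fun k ↦ (((k : ℝ) + a) ^ s)⁻¹ with hc
  have hratio : Tendsto (fun k ↦ ‖c k‖ / ‖c k.succ‖) atTop (𝓝 ((1 : NNReal) : ℝ)) := by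
    simpa [hc, div_eq_mul_inv, mul_comm] using (tendsto_succ_add_rpow_div_add_rpow s a).norm
  have hradius : (FormalMultilinearSeries.ofScalars ℝ c).radius = 1 := by
    simpa using FormalMultilinearSeries.ofScalars_radius_eq_of_tendsto ℝ c one_ne_zero hratio
  have hsum : (FormalMultilinearSeries.ofScalars ℝ c).sum = fun z ↦ lerchPhi z s a := by
    funext z
    simp [FormalMultilinearSeries.sum, lerchPhi, hc, div_eq_mul_inv]
  have hseries := (FormalMultilinearSeries.ofScalars ℝ c).hasFPowerSeriesOnBall
    (hradius ▸ zero_lt_one)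
  rwa [hradius, hsum] at hseries

theorem lerchPhi_zero (s a : ℝ) : lerchPhi 0 s a = (a ^ s)⁻¹ := by
  rw [lerchPhi, tsum_eq_single 0 fun k hk ↦ by simp [hk]]
  simp

theorem tendsto_lerchPhi_nhds_zero (s a : ℝ) :
    Tendsto (fun z ↦ lerchPhi z s a) (𝓝 0) (𝓝 (a ^ s)⁻¹) :=
  lerchPhi_zero s a ▸ (hasFPowerSeriesOnBall_lerchPhi s a).analyticAt.continuousAt.tendsto

theorem tendsto_lerchPhi_pow_nhds_zero (s a : ℝ) {n : ℕ} (hn : n ≠ 0) :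
    Tendsto (fun x ↦ lerchPhi (x ^ n) s a) (𝓝 0) (𝓝 (a ^ s)⁻¹) :=
  (tendsto_lerchPhi_nhds_zero s a).comp ((continuous_pow n).tendsto' 0 0 (zero_pow hn))

theorem tendsto_arcsl_div_mul_lerchPhi (s : ℝ) {a : ℝ} (ha : 0 < a) {n : ℕ} (hn : n ≠ 0) :
    Tendsto (fun x ↦ arcsl x / (x * lerchPhi (x ^ n) s a)) (𝓝[≠] 0) (𝓝 (a ^ s)) := by
  have hPhi : Tendsto (fun x ↦ lerchPhi (x ^ n) s a) (𝓝[≠] 0) (𝓝 (a ^ s)⁻¹) :=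
    (tendsto_lerchPhi_pow_nhds_zero s a hn).mono_left nhdsWithin_le_nhds
  simpa [Pi.div_def, div_div] using
    tendsto_arcsl_div_self.div hPhi (inv_ne_zero (Real.rpow_pos_of_pos ha s).ne')

theorem le_rpow_of_frequently_mul_lerchPhi_le_arcsl {s a α : ℝ} (ha : 0 < a) {n : ℕ} (hn : n ≠ 0)
    (hα : ∃ᶠ x in 𝓝[>] 0, α * x * lerchPhi (x ^ n) s a ≤ arcsl x) : α ≤ a ^ s := by
  have hPhi_pos : ∀ᶠ x in 𝓝 0, 0 < lerchPhi (x ^ n) s a :=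
    (tendsto_lerchPhi_pow_nhds_zero s a hn).eventually_const_lt
      (inv_pos.2 (Real.rpow_pos_of_pos ha s))
  refine ge_of_tendsto_of_frequently
    ((tendsto_arcsl_div_mul_lerchPhi s ha hn).mono_left (nhdsGT_le_nhdsNE 0)) ?_
  refine (hα.and_eventually
    ((hPhi_pos.filter_mono nhdsWithin_le_nhds).and self_mem_nhdsWithin)).mono ?_
  rintro x ⟨hle, hPhi, hx⟩
  rwa [le_div_iff₀ (mul_pos hx hPhi), ← mul_assoc]

theorem tendsto_ratio_zero_and_alpha_sharp_general (s : ℝ) {a : ℝ} (ha : 0 < a) {n : ℕ}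
    (hn : n ≠ 0) :
    Tendsto (fun x ↦ arcsl x / (x * lerchPhi (x ^ n) s a)) (𝓝[≠] 0) (𝓝 (a ^ s)) ∧
    ∀ α : ℝ, (∃ᶠ x in 𝓝[>] 0, α * x * lerchPhi (x ^ n) s a ≤ arcsl x) → α ≤ a ^ s :=
  ⟨tendsto_arcsl_div_mul_lerchPhi s ha hn,
    fun _ ↦ le_rpow_of_frequently_mul_lerchPhi_le_arcsl ha hn⟩

theorem one_div_four_rpow_three_div_two : (1 / 4 : ℝ) ^ (3 / 2 : ℝ) = 1 / 8 := by
  rw [show (1 / 4 : ℝ) = (1 / 2) ^ (2 : ℝ) by norm_num, ← Real.rpow_mul (by norm_num)]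
  norm_num

theorem tendsto_ratio_zero_and_alpha_sharp :
    Filter.Tendsto (fun x : ℝ => arcsl x / (x * lerchPhi (x ^ 4) (3 / 2) (1 / 4)))
      (nhdsWithin 0 (Set.Ioi 0)) (nhds (1 / 8)) ∧
    ∀ α : ℝ, (∀ x : ℝ, 0 < x → x < 1 →
        α * x * lerchPhi (x ^ 4) (3 / 2) (1 / 4) < arcsl x) → α ≤ 1 / 8 := by
  obtain ⟨hlim, hsharp⟩ := one_div_four_rpow_three_div_two ▸
    tendsto_ratio_zero_and_alpha_sharp_general (3 / 2) (a := 1 / 4) (by norm_num) four_ne_zero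
  refine ⟨hlim.mono_left (nhdsGT_le_nhdsNE 0), fun α hα ↦ hsharp α (Eventually.frequently ?_)⟩
  filter_upwards [Ioo_mem_nhdsGT one_pos] with x hx using (hα x hx.1 hx.2).le
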